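/- arXiv:2205.00734 — 5 statements merged into one kernel-verified Lean document; each statement's English description precedes it below -/
import Mathlib

section
/- The equivalence relation ∼ on finite words over a finite alphabet A is a congruence for concatenation: if u ∼ u' and v ∼ v', then u·v ∼ u'·v'. -/
/-!
The word `w` acts on irreducible words by pushing its letters one after the other on a stack, a
letter cancelling against an equal letter on top. Pushing the same letter twice does nothing, so
the final stack `stackNF w` is invariant under rewriting (`stackNF_eq_of_steps`); it fixes
irreducible words (`stackNF_of_isIrred`). Hence `stackNF w` is the only irreducible word reachable
from `w`, so `nf = stackNF`. Since rewriting is compatible with concatenation,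
`u ++ v →* nf u ++ nf v`, and therefore `nf (u ++ v) = stackNF (nf u ++ nf v)` depends only on
`nf u` and `nf v`.
-/

/-- One rewriting step: `w → w'` iff `w'` is obtained from `w` by deleting two
consecutive identical symbols. -/
def Step {A : Type*} (w w' : List A) : Prop :=
  ∃ (u v : List A) (a : A), w = u ++ [a, a] ++ v ∧ w' = u ++ v

/-- A word is irreducible for `→` if no rewriting step applies to it. -/
def IsIrred {A : Type*} (w : List A) : Prop := ∀ w', ¬ Step w w'

open Relation

open Classical in
/-- Push the letter `a` on the stack `l`, cancelling it against an equal top letter. -/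
noncomputable def pushLetter {A : Type*} (a : A) : List A → List A
  | [] => [a]
  | b :: l => if a = b then l else a :: b :: l

/-- The stack obtained by pushing the letters of `w`, from right to left, on the empty stack. -/
noncomputable def stackNF {A : Type*} (w : List A) : List A := w.foldr pushLetter []

lemma isChain_pushLetter {A : Type*} (a : A) {l : List A} (h : l.IsChain (· ≠ ·)) :
    (pushLetter a l).IsChain (· ≠ ·) := by
  cases l with
  | nil => simp [pushLetter]
  | cons b l =>
    by_cases hab : a = b
    · simpa [pushLetter, hab] using h.tail
    · simpa [pushLetter, hab] using h

lemma pushLetter_pushLetter {A : Type*} (a : A) {l : List A} (h : l.IsChain (· ≠ ·)) :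
    pushLetter a (pushLetter a l) = l := by
  rcases l with _ | ⟨b, _ | ⟨c, l⟩⟩
  · simp [pushLetter]
  · by_cases hab : a = b <;> simp [pushLetter, hab]
  · have hbc : b ≠ c := by simp at h; exact h.1
    by_cases hab : a = b <;> simp [pushLetter, hab, hbc]

lemma isChain_stackNF {A : Type*} (w : List A) : (stackNF w).IsChain (· ≠ ·) := by
  induction w with
  | nil => simp [stackNF]
  | cons a w ih => exact isChain_pushLetter a ih

lemma stackNF_eq_of_step {A : Type*} {w w' : List A} (h : Step w w') :
    stackNF w = stackNF w' := by
  obtain ⟨u, v, a, rfl, rfl⟩ := h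
  have := pushLetter_pushLetter a (isChain_stackNF v)
  simp only [stackNF] at this
  simp [stackNF, this]

lemma stackNF_eq_of_steps {A : Type*} {w w' : List A} (h : ReflTransGen Step w w') :
    stackNF w = stackNF w' := by
  induction h with
  | refl => rfl
  | tail _ h ih => exact ih.trans (stackNF_eq_of_step h)

lemma stackNF_of_isIrred {A : Type*} {w : List A} (h : IsIrred w) : stackNF w = w := by
  induction w with
  | nil => rfl
  | cons a w ih =>
    have hw : IsIrred w := by
      rintro _ ⟨u, v, b, rfl, rfl⟩
      exact h (a :: u ++ v) ⟨a :: u, v, b, by simp, rfl⟩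
    change pushLetter a (stackNF w) = _
    rw [ih hw]
    cases w with
    | nil => rfl
    | cons b w =>
      have hab : a ≠ b := by
        rintro rfl
        exact h w ⟨[], w, a, rfl, rfl⟩
      simp [pushLetter, hab]

lemma steps_append {A : Type*} {u u' v v' : List A} (hu : ReflTransGen Step u u')
    (hv : ReflTransGen Step v v') : ReflTransGen Step (u ++ v) (u' ++ v') := by
  refine (ReflTransGen.lift (· ++ v) ?_ _ _ hu).trans (ReflTransGen.lift (u' ++ ·) ?_ _ _ hv)
  · rintro _ _ ⟨x, y, a, rfl, rfl⟩
    exact ⟨x, y ++ v, a, by simp, by simp⟩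
  · rintro _ _ ⟨x, y, a, rfl, rfl⟩
    exact ⟨u' ++ x, y, a, by simp, by simp⟩

/-- The equivalence `u ∼ u' ↔ nf u = nf u'` is a congruence with respect to
concatenation: `u ∼ u'` and `v ∼ v'` imply `u·v ∼ u'·v'`. -/
theorem sim_congruence {A : Type*} [Fintype A] (nf : List A → List A)
    (hnf : ∀ w, Relation.ReflTransGen Step w (nf w) ∧ IsIrred (nf w))
    (u u' v v' : List A) (hu : nf u = nf u') (hv : nf v = nf v') :
    nf (u ++ v) = nf (u' ++ v') := by
  have key (x y : List A) : nf (x ++ y) = stackNF (nf x ++ nf y) := by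
    rw [← stackNF_of_isIrred (hnf (x ++ y)).2, ← stackNF_eq_of_steps (hnf (x ++ y)).1]
    exact stackNF_eq_of_steps (steps_append (hnf x).1 (hnf y).1)
  rw [key, key, hu, hv]
end

section
/- For every finite word w over a finite alphabet A, the stack content obtained by processing w with the stack-update rule (starting from the empty stack) equals the reverse of the irreducible normal form ŵ of w. Precisely, define S(ε) = [] and, for a word w and symbol a: S(w·a) = tail of S(w) if the head of S(w) equals a, and S(w·a) = a :: S(w) otherwise (stacks are lists with the top symbol at the head); then S(w) = reverse of ŵ for every word w. -/
/-- The stack-update rule: reading a symbol equal to the top of the stack pops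
it, otherwise the symbol is pushed (the top of the stack is the head). -/
def stackStep {A : Type*} [DecidableEq A] (s : List A) (a : A) : List A :=
  if s.head? = some a then s.tail else a :: s

/-- The stack content after processing the word `w`, starting from the empty
stack. -/
def stackOf {A : Type*} [DecidableEq A] (w : List A) : List A :=
  w.foldl stackStep []

/-- Without the chain hypothesis this fails: from `[a, a]`, reading `a` twice yields `[]`. -/
lemma stackStep_stackStep {A : Type*} [DecidableEq A] {s : List A}
    (hs : s.IsChain (· ≠ ·)) (a : A) : stackStep (stackStep s a) a = s := by
  rcases s with _ | ⟨b, _ | ⟨c, s⟩⟩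
  · simp [stackStep]
  · by_cases h : b = a <;> simp [stackStep, h]
  · by_cases h : b = a
    · subst h
      have : c ≠ b := fun h => (List.isChain_cons_cons.1 hs).1 h.symm
      simp [stackStep, this]
    · simp [stackStep, h]

lemma isChain_stackStep {A : Type*} [DecidableEq A] {s : List A}
    (hs : s.IsChain (· ≠ ·)) (a : A) : (stackStep s a).IsChain (· ≠ ·) := by
  unfold stackStep
  split_ifs with h
  · exact hs.tail
  · rcases s with _ | ⟨b, s⟩
    · simp
    · refine List.isChain_cons_cons.2 ⟨?_, hs⟩
      rintro rfl
      simp at h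

lemma isChain_stackOf {A : Type*} [DecidableEq A] (w : List A) :
    (stackOf w).IsChain (· ≠ ·) := by
  induction w using List.reverseRecOn with
  | nil => simp [stackOf]
  | append_singleton w a ih =>
    simpa [stackOf, List.foldl_append] using isChain_stackStep ih a

lemma stackOf_eq_of_step {A : Type*} [DecidableEq A] {w w' : List A} (h : Step w w') :
    stackOf w = stackOf w' := by
  obtain ⟨u, v, a, rfl, rfl⟩ := h
  have := stackStep_stackStep (isChain_stackOf u) a
  simp only [stackOf] at this
  simp [stackOf, List.foldl_append, this]

lemma stackOf_eq_reverse_of_isIrred {A : Type*} [DecidableEq A] (w : List A)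
    (h : IsIrred w) : stackOf w = w.reverse := by
  induction w using List.reverseRecOn with
  | nil => simp [stackOf]
  | append_singleton w a ih =>
    have hw : stackOf w = w.reverse := by
      apply ih
      rintro _ ⟨u, v, b, rfl, rfl⟩
      exact h _ ⟨u, v ++ [a], b, by simp, rfl⟩
    have hstep : stackOf (w ++ [a]) = stackStep w.reverse a := by
      rw [← hw]; simp [stackOf, List.foldl_append]
    -- A pop would mean that `w` ends in `a`, so that `w ++ [a]` ends in the redex `a a`.
    have hlast : w.reverse.head? ≠ some a := by
      rw [List.head?_reverse]
      intro hl
      obtain ⟨u, rfl⟩ := List.getLast?_eq_some_iff.1 hl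
      exact h _ ⟨u, [], a, by simp, rfl⟩
    rw [hstep, stackStep, if_neg hlast]
    simp

/-- If `nf` assigns to each word its irreducible normal form under `→`, then
the stack obtained by processing `w` is the reverse of `nf w`. -/
theorem stack_eq_reverse_normal_form {A : Type*} [Fintype A] [DecidableEq A]
    (nf : List A → List A)
    (hnf : ∀ w, Relation.ReflTransGen Step w (nf w) ∧ IsIrred (nf w)) :
    ∀ w : List A, stackOf w = (nf w).reverse := by
  intro w
  obtain ⟨hred, hirr⟩ := hnf w
  rw [← stackOf_eq_reverse_of_isIrred _ hirr]
  clear hirr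
  generalize nf w = n at hred ⊢
  induction hred using Relation.ReflTransGen.head_induction_on with
  | refl => rfl
  | head hstep _ ih => exact (stackOf_eq_of_step hstep).trans ih
end

section
/- Let A = {0,…,k−1} with k ≥ 2 and, for each n ≥ 1, let w_n be the concatenation in lexicographic order of all k^n words of length n over A. For all n ≥ 3, the number of blocks of length 1 in the word w_n·w̃_n is exactly ((k−1)²/k²)·|w_n·w̃_n|, i.e., exactly 2·n·(k−1)²·k^{n−2}. -/
/-!
Write `W = w_n`, `L = |W|`. Since `W` starts with `00` and the two symbols around the centre of
`W · W̃` agree, neither the ends nor the two central positions are blocks of length 1. By symmetry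
the count is twice the number of interior positions `p` of `W` with `W[p-1] ≠ W[p] ≠ W[p+1]`
(`singletonBlocks_append_reverse`).

Split the positions `p = i n + j` by column `j`. In every column the condition on `i < k^n` is
equivalent to `σ(d_p) ≠ d_q ∧ d_q ≠ d_r`, where `d` denotes base-`k` digits of `i`, the places
`p, q, r` are distinct and `σ` permutes the alphabet:
* for a middle column the three digits are adjacent and `σ = id`;
* for column `0` the preceding symbol is the last digit of `i - 1`, which is the last digit of `i`
  shifted cyclically by `-1`;
* for column `n - 1` the following symbol is the leading digit of `i + 1`. As the last two
  digits of `i` differ, adding `1` produces no carry past these two digits, so this is the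
  leading digit of `i` (here `n ≥ 3` is used).

Choosing the digits independently (`card_digits`) gives `(k-1)² k^(n-2)` for each column, hence
`n (k-1)² k^(n-2)` for `W`.
-/

/-- The word of index `i` (for `0 ≤ i < k^n`) in the lexicographic enumeration of
all words of length `n` over `{0, …, k-1}`: the base-`k` expansion of `i`, most
significant digit first, padded with zeros to length `n`. -/
def lexWord (k : ℕ) (hk : 0 < k) (n i : ℕ) : List (Fin k) :=
  List.ofFn fun j : Fin n => (⟨i / k ^ (n - 1 - (j : ℕ)) % k, Nat.mod_lt _ hk⟩ : Fin k)

/-- `wn k hk n` is the concatenation, in lexicographic order, of all `k^n` words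
of length `n` over the alphabet `{0, …, k-1}`. -/
def wn (k : ℕ) (hk : 0 < k) (n : ℕ) : List (Fin k) :=
  ((List.range (k ^ n)).map (lexWord k hk n)).flatten

/-- The number of blocks of length 1 of a word `w`: the number of positions
(0-indexed) whose symbol differs from each of its existing neighbours. -/
def singletonBlocks {A : Type*} [DecidableEq A] (w : List A) : ℕ :=
  ((Finset.range w.length).filter fun i =>
    (i = 0 ∨ w[i - 1]? ≠ w[i]?) ∧ (i + 1 = w.length ∨ w[i]? ≠ w[i + 1]?)).card

/-- The digit of `i` in base `k` at place `m`, the least significant place being `0`. -/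
def dig (k m i : ℕ) : ℕ := i / k ^ m % k

/-- Position `p` is an interior position of `w` whose symbol differs from both neighbours. -/
def InnerSingleton {A : Type*} (w : List A) (p : ℕ) : Prop :=
  1 ≤ p ∧ p + 1 < w.length ∧ w[p - 1]? ≠ w[p]? ∧ w[p]? ≠ w[p + 1]?

/-! ### Reduction to one half of the word -/

open Classical in
theorem singletonBlocks_append_reverse {A : Type*} [DecidableEq A] (w : List A)
    (hL : 2 ≤ w.length) (h01 : w[0]? = w[1]?) :
    singletonBlocks (w ++ w.reverse) =
      2 * ((Finset.range w.length).filter (InnerSingleton w)).card := by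
  set L := w.length with hLdef
  have hlow : ∀ p, p < L → (w ++ w.reverse)[p]? = w[p]? := fun p hp =>
    List.getElem?_append_left hp
  have hhigh : ∀ p, L ≤ p → p < 2 * L → (w ++ w.reverse)[p]? = w[2 * L - 1 - p]? := by
    intro p hp hp2
    rw [List.getElem?_append_right hp, List.getElem?_reverse (by omega)]
    congr 1
    omega
  have hlen : (w ++ w.reverse).length = 2 * L := by simp [← hLdef]; omega
  unfold singletonBlocks
  rw [hlen]
  generalize hV : w ++ w.reverse = V at *
  have hsplit : (Finset.range (2 * L)).filter (fun i =>
      (i = 0 ∨ V[i - 1]? ≠ V[i]?) ∧ (i + 1 = 2 * L ∨ V[i]? ≠ V[i + 1]?)) =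
      ((Finset.range L).filter (InnerSingleton w)) ∪
      ((Finset.range L).filter (InnerSingleton w)).image (fun p => 2 * L - 1 - p) := by
    ext p
    simp only [Finset.mem_filter, Finset.mem_range, Finset.mem_union, Finset.mem_image]
    rcases lt_or_ge p L with hp | hp
    · have hno : ¬ ∃ a, (a < L ∧ InnerSingleton w a) ∧ 2 * L - 1 - a = p := by
        rintro ⟨a, ⟨ha, -⟩, h⟩
        omega
      rw [or_iff_left hno]
      simp only [hp, true_and, InnerSingleton, ← hLdef]
      rw [hlow p hp]
      rcases Nat.eq_zero_or_pos p with rfl | h0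
      · rw [hlow 1 (by omega)]
        simp [h01]
        omega
      · rw [hlow (p - 1) (by omega)]
        rcases Nat.lt_or_ge (p + 1) L with h1 | h1
        · rw [hlow (p + 1) h1]
          constructor
          · rintro ⟨_, h, h'⟩
            exact ⟨h0, h1, h.resolve_left (by omega), h'.resolve_left (by omega)⟩
          · rintro ⟨_, _, h, h'⟩
            exact ⟨by omega, Or.inr h, Or.inr h'⟩
        · rw [hhigh (p + 1) h1 (by omega), show 2 * L - 1 - (p + 1) = p by omega]
          constructor
          · rintro ⟨_, _, h | h⟩
            · omega
            · exact absurd rfl h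
          · rintro ⟨_, h, _⟩
            omega
    · constructor
      · rintro ⟨hp2, h, h'⟩
        right
        refine ⟨2 * L - 1 - p, ⟨by omega, ?_⟩, by omega⟩
        rw [hhigh p hp hp2] at h h'
        have hpL : p ≠ L := by
          rintro rfl
          rcases h with h | h
          · omega
          · rw [hlow _ (by omega)] at h
            apply h
            congr 1
            omega
        have hpL2 : p + 1 ≠ 2 * L := by
          intro hp3
          rcases h with h | h
          · omega
          · rw [hhigh (p - 1) (by omega) (by omega)] at h
            apply h
            rw [show 2 * L - 1 - (p - 1) = 1 by omega, show 2 * L - 1 - p = 0 by omega, h01]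
        have h := h.resolve_left (by omega)
        have h' := h'.resolve_left hpL2
        rw [hhigh (p - 1) (by omega) (by omega)] at h
        rw [hhigh (p + 1) (by omega) (by omega)] at h'
        refine ⟨by omega, by omega, ?_, ?_⟩
        · rw [show 2 * L - 1 - p - 1 = 2 * L - 1 - (p + 1) by omega]
          exact h'.symm
        · rw [show 2 * L - 1 - p + 1 = 2 * L - 1 - (p - 1) by omega]
          exact h.symm
      · rintro (⟨h, _⟩ | ⟨a, ⟨ha, h0, h1, h, h'⟩, rfl⟩)
        · omega
        · rw [← hLdef] at h1
          refine ⟨by omega, Or.inr ?_, Or.inr ?_⟩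
          · rw [hhigh _ hp (by omega), hhigh _ (by omega) (by omega),
              show 2 * L - 1 - (2 * L - 1 - a - 1) = a + 1 by omega,
              show 2 * L - 1 - (2 * L - 1 - a) = a by omega]
            exact h'.symm
          · rw [hhigh _ hp (by omega), hhigh _ (by omega) (by omega),
              show 2 * L - 1 - (2 * L - 1 - a + 1) = a - 1 by omega,
              show 2 * L - 1 - (2 * L - 1 - a) = a by omega]
            exact h.symm
  rw [hsplit, Finset.card_union_of_disjoint, Finset.card_image_of_injOn]
  · omega
  · intro a ha b hb hab
    simp only [Finset.coe_filter, Finset.mem_range, Set.mem_ofPred_eq] at ha hb hab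
    omega
  · rw [Finset.disjoint_left]
    intro a ha hb
    simp only [Finset.mem_filter, Finset.mem_range, Finset.mem_image] at ha hb
    obtain ⟨b, ⟨hb, -⟩, h⟩ := hb
    omega

/-! ### The symbols of `wn` -/

theorem length_flatten_uniform {A : Type*} (f : ℕ → List A) (n : ℕ)
    (hf : ∀ i, (f i).length = n) (m : ℕ) :
    ((List.range m).map f).flatten.length = m * n := by
  induction m with
  | zero => simp
  | succ m ih =>
    rw [List.range_succ, List.map_append, List.flatten_append, List.length_append, ih]
    simp [hf, Nat.succ_mul]

theorem getElem?_flatten_uniform {A : Type*} (f : ℕ → List A) (n : ℕ)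
    (hf : ∀ i, (f i).length = n) (m i j : ℕ) (hi : i < m) (hj : j < n) :
    ((List.range m).map f).flatten[i * n + j]? = (f i)[j]? := by
  induction m with
  | zero => omega
  | succ m ih =>
    rw [List.range_succ, List.map_append, List.flatten_append]
    have hlen := length_flatten_uniform f n hf m
    rcases Nat.lt_or_ge i m with h | h
    · rw [List.getElem?_append_left, ih h]
      rw [hlen]
      nlinarith
    · obtain rfl : i = m := by omega
      rw [List.getElem?_append_right (by omega), hlen]
      simp

theorem length_wn (k : ℕ) (hk : 0 < k) (n : ℕ) : (wn k hk n).length = k ^ n * n :=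
  length_flatten_uniform _ n (fun i => by simp [lexWord]) _

theorem getElem?_wn (k : ℕ) (hk : 0 < k) (n i j : ℕ) (hi : i < k ^ n) (hj : j < n) :
    (wn k hk n)[i * n + j]? = some ⟨dig k (n - 1 - j) i, Nat.mod_lt _ hk⟩ := by
  unfold wn
  rw [getElem?_flatten_uniform _ n (fun i => by simp [lexWord]) _ i j hi hj]
  simp [lexWord, hj, dig]

/-! ### Counting by digits -/

/-- Three digits at distinct places are independent: for each value `c` of the digit at `q`, one
value is excluded at `p` and one at `r`. -/
theorem card_functions (k n : ℕ) (σ : Equiv.Perm (Fin k)) (p q r : Fin n)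
    (hpq : p ≠ q) (hqr : q ≠ r) (hpr : p ≠ r) :
    (Finset.univ.filter fun f : Fin n → Fin k => σ (f p) ≠ f q ∧ f q ≠ f r).card =
      k * ((k - 1) ^ 2 * k ^ (n - 3)) := by
  classical
  let S : Fin k → Fin n → Finset (Fin k) := fun c x =>
    if x = q then {c} else if x = p then {σ.symm c}ᶜ else if x = r then {c}ᶜ else Finset.univ
  have hfib : ∀ c : Fin k, ((Finset.univ.filter fun f : Fin n → Fin k =>
      σ (f p) ≠ f q ∧ f q ≠ f r).filter fun f => f q = c) = Fintype.piFinset (S c) := by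
    intro c
    ext f
    simp only [Finset.mem_filter, Finset.mem_univ, true_and, Fintype.mem_piFinset, S]
    constructor
    · rintro ⟨⟨h1, h2⟩, rfl⟩ x
      split_ifs with a b d
      · simp [a]
      · subst b
        simpa [Equiv.eq_symm_apply] using h1
      · subst d
        simpa using h2.symm
      · simp
    · intro h
      have hq := h q
      have hp := h p
      have hr := h r
      simp [hpq, hqr.symm, hpr.symm, Equiv.eq_symm_apply] at hq hp hr
      subst hq
      exact ⟨⟨hp, fun e => hr e.symm⟩, rfl⟩
  have hcard : ∀ c : Fin k, (Fintype.piFinset (S c)).card = (k - 1) ^ 2 * k ^ (n - 3) := by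
    intro c
    rw [Fintype.card_piFinset, ← Finset.mul_prod_erase _ _ (Finset.mem_univ q),
      ← Finset.mul_prod_erase _ _ (show p ∈ Finset.univ.erase q by simp [hpq]),
      ← Finset.mul_prod_erase _ _
        (show r ∈ (Finset.univ.erase q).erase p by simp [hqr.symm, hpr.symm]),
      Finset.prod_congr rfl (g := fun _ => k)]
    · rw [Finset.prod_const, Finset.card_erase_of_mem (by simp [hqr.symm, hpr.symm]),
        Finset.card_erase_of_mem (by simp [hpq]), Finset.card_erase_of_mem (by simp)]
      simp [S, hpq, hqr.symm, hpr.symm, Finset.card_compl, Nat.sub_sub]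
      ring
    · intro x hx
      simp only [Finset.mem_erase, Finset.mem_univ, and_true] at hx
      simp [S, hx.1, hx.2.1, hx.2.2]
  rw [Finset.card_eq_sum_card_fiberwise (f := fun f => f q) (t := Finset.univ)
    (fun _ _ => Finset.mem_coe.2 (Finset.mem_univ _))]
  simp only [hfib, hcard]
  simp

/-- `card_functions` transported along base-`k` expansion; `s` is the permutation `σ` acting on
symbols regarded as natural numbers. -/
theorem card_digits (k n : ℕ) (hn : 3 ≤ n) (σ : Equiv.Perm (Fin k)) (s : ℕ → ℕ)
    (hs : ∀ x : Fin k, s x = σ x) (p q r : ℕ) (hp : p < n) (hq : q < n) (hr : r < n)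
    (hpq : p ≠ q) (hqr : q ≠ r) (hpr : p ≠ r) :
    ((Finset.range (k ^ n)).filter fun i =>
      s (dig k p i) ≠ dig k q i ∧ dig k q i ≠ dig k r i).card = (k - 1) ^ 2 * k ^ (n - 2) := by
  have h := card_functions k n σ ⟨p, hp⟩ ⟨q, hq⟩ ⟨r, hr⟩ (by simpa) (by simpa) (by simpa)
  have hpow : k ^ (n - 2) = k * k ^ (n - 3) := by
    rw [← pow_succ']
    congr 1
    omega
  rw [hpow]
  trans k * ((k - 1) ^ 2 * k ^ (n - 3))
  swap
  · ring
  rw [← h]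
  symm
  have hd : ∀ (f : Fin n → Fin k) (m : Fin n), dig k m (finFunctionFinEquiv f) = f m := by
    intro f m
    conv_rhs => rw [← finFunctionFinEquiv.symm_apply_apply f]
    rfl
  refine Finset.card_bij (fun f _ => (finFunctionFinEquiv f : ℕ)) ?_ ?_ ?_
  · intro f hf
    have h1 := hd f ⟨p, hp⟩
    have h2 := hd f ⟨q, hq⟩
    have h3 := hd f ⟨r, hr⟩
    simp only [Finset.mem_filter, Finset.mem_univ, true_and] at hf
    simp only [Finset.mem_filter, Finset.mem_range, Fin.is_lt, true_and]
    simp only at h1 h2 h3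
    rw [h1, h2, h3, hs]
    exact ⟨fun e => hf.1 (Fin.ext e), fun e => hf.2 (Fin.ext e)⟩
  · intro f _ g _ hfg
    exact finFunctionFinEquiv.injective (Fin.ext hfg)
  · intro i hi
    simp only [Finset.mem_filter, Finset.mem_range] at hi
    obtain ⟨hi, hA, hB⟩ := hi
    obtain ⟨f, hf⟩ := finFunctionFinEquiv.surjective (⟨i, hi⟩ : Fin (k ^ n))
    have hfi : (finFunctionFinEquiv f : ℕ) = i := by rw [hf]
    have h1 := hd f ⟨p, hp⟩
    have h2 := hd f ⟨q, hq⟩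
    have h3 := hd f ⟨r, hr⟩
    simp only [hfi] at h1 h2 h3
    refine ⟨f, ?_, hfi⟩
    rw [h1, h2, hs] at hA
    rw [h2, h3] at hB
    simp only [Finset.mem_filter, Finset.mem_univ, true_and]
    exact ⟨fun e => hA (congrArg Fin.val e), fun e => hB (congrArg Fin.val e)⟩

/-- If the last two digits of `i` differ, they are not both `k - 1`, so `i + 1` is not divisible
by `k²`. -/
theorem not_sq_dvd_succ (k i : ℕ) (hk : 2 ≤ k) (h : dig k 1 i ≠ dig k 0 i) : ¬ k ^ 2 ∣ i + 1 := by
  rintro ⟨m, hm⟩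
  apply h
  have hm0 : 0 < m := by
    rcases Nat.eq_zero_or_pos m with rfl | h
    · simp at hm
    · exact h
  obtain ⟨m, rfl⟩ : ∃ t, m = t + 1 := ⟨m - 1, by omega⟩
  obtain ⟨c, rfl⟩ : ∃ c, k = c + 1 := ⟨k - 1, by omega⟩
  have hi : i = c + (c + 1) * (c + (c + 1) * m) := by
    have : i + 1 = c + (c + 1) * (c + (c + 1) * m) + 1 := by rw [hm]; ring
    omega
  have h0 : i % (c + 1) = c := by
    rw [hi, Nat.add_mul_mod_self_left, Nat.mod_eq_of_lt (by omega)]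
  have h1 : i / (c + 1) = c + (c + 1) * m := by
    rw [hi, Nat.add_mul_div_left _ _ (by omega), Nat.div_eq_of_lt (by omega), zero_add]
  simp only [dig, pow_one, pow_zero, Nat.div_one, h0, h1]
  rw [Nat.add_mul_mod_self_left, Nat.mod_eq_of_lt (by omega)]

/-- The preceding letter in cyclic order: `x ↦ x - 1` modulo `k`. -/
def predPerm (k : ℕ) (hk : 0 < k) : Equiv.Perm (Fin k) where
  toFun x := ⟨(x + (k - 1)) % k, Nat.mod_lt _ hk⟩
  invFun x := ⟨(x + 1) % k, Nat.mod_lt _ hk⟩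
  left_inv x := by
    ext
    simp only [Nat.mod_add_mod]
    rw [show (x : ℕ) + (k - 1) + 1 = x + k by omega, Nat.add_mod_right, Nat.mod_eq_of_lt x.2]
  right_inv x := by
    ext
    simp only [Nat.mod_add_mod]
    rw [show (x : ℕ) + 1 + (k - 1) = x + k by omega, Nat.add_mod_right, Nat.mod_eq_of_lt x.2]

open Classical in
theorem card_column (k n : ℕ) (hk : 2 ≤ k) (hn : 3 ≤ n) (hk0 : 0 < k) (j : ℕ) (hj : j < n) :
    ((Finset.range (k ^ n)).filter fun i => InnerSingleton (wn k hk0 n) (i * n + j)).card =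
      (k - 1) ^ 2 * k ^ (n - 2) := by
  have hlen := length_wn k hk0 n
  have hW := getElem?_wn k hk0 n
  have hbound : ∀ i j, i < k ^ n → j < n → i * n + j < k ^ n * n := by
    intro i j hi hj
    nlinarith
  rcases Nat.eq_zero_or_pos j with rfl | hj0
  · rw [← card_digits k n hn (predPerm k hk0) (fun x => (x + (k - 1)) % k) (fun _ => rfl)
      0 (n - 1) (n - 2) (by omega) (by omega) (by omega) (by omega) (by omega) (by omega)]
    congr 1
    refine Finset.filter_congr fun i hi => ?_
    rw [Finset.mem_range] at hi
    rcases Nat.eq_zero_or_pos i with rfl | hi0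
    · simp [InnerSingleton, dig]
    · obtain ⟨i, rfl⟩ : ∃ t, i = t + 1 := ⟨i - 1, by omega⟩
      have e : (i + 1) * n + 0 - 1 = i * n + (n - 1) := by
        rw [Nat.succ_mul]
        omega
      have hpred : dig k (n - 1 - (n - 1)) i = (dig k 0 (i + 1) + (k - 1)) % k := by
        simp only [dig, Nat.sub_self, pow_zero, Nat.div_one, Nat.mod_add_mod]
        rw [show i + 1 + (k - 1) = i + k by omega, Nat.add_mod_right]
      unfold InnerSingleton
      rw [e, add_assoc ((i + 1) * n) 0 1, hW i (n - 1) (by omega) (by omega),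
        hW (i + 1) 0 hi hj, hW (i + 1) (0 + 1) hi (by omega), hlen]
      have hb := hbound (i + 1) (0 + 1) hi (by omega)
      have hpos : 1 ≤ (i + 1) * n + 0 := by nlinarith
      simp only [hb, hpos, true_and, ne_eq, Option.some.injEq, Fin.ext_iff, hpred]
      rw [show n - 1 - 0 = n - 1 by omega, show n - 1 - (0 + 1) = n - 2 by omega]
  · rcases Nat.lt_or_ge (j + 1) n with hj1 | hj1
    · rw [← card_digits k n hn (Equiv.refl _) id (fun _ => rfl)
        (n - 1 - (j - 1)) (n - 1 - j) (n - 1 - (j + 1)) (by omega) (by omega) (by omega)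
        (by omega) (by omega) (by omega)]
      congr 1
      refine Finset.filter_congr fun i hi => ?_
      rw [Finset.mem_range] at hi
      unfold InnerSingleton
      rw [show i * n + j - 1 = i * n + (j - 1) by omega, add_assoc (i * n) j 1,
        hW i (j - 1) hi (by omega), hW i j hi hj, hW i (j + 1) hi hj1, hlen]
      have hb := hbound i (j + 1) hi hj1
      have hpos : 1 ≤ i * n + j := by omega
      simp only [hb, hpos, true_and, ne_eq, Option.some.injEq, Fin.ext_iff, id]
    · obtain rfl : j = n - 1 := by omega
      rw [← card_digits k n hn (Equiv.refl _) id (fun _ => rfl)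
        1 0 (n - 1) (by omega) (by omega) (by omega) (by omega) (by omega) (by omega)]
      congr 1
      refine Finset.filter_congr fun i hi => ?_
      rw [Finset.mem_range] at hi
      have e : i * n + (n - 1) + 1 = (i + 1) * n + 0 := by
        rw [Nat.succ_mul]
        omega
      have hpos : 1 ≤ i * n + (n - 1) := by omega
      unfold InnerSingleton
      rw [e, show i * n + (n - 1) - 1 = i * n + (n - 2) by omega,
        hW i (n - 2) hi (by omega), hW i (n - 1) hi hj, hlen]
      rw [show n - 1 - (n - 2) = 1 by omega, show n - 1 - (n - 1) = 0 by omega]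
      simp only [hpos, true_and, ne_eq, Option.some.injEq, Fin.ext_iff, id]
      by_cases hd : dig k 1 i = dig k 0 i
      · simp [hd]
      have hdvd := not_sq_dvd_succ k i hk hd
      have hlast : i + 1 < k ^ n := by
        refine lt_of_le_of_ne hi fun h => hdvd ?_
        rw [h]
        exact pow_dvd_pow k (by omega)
      have hlead : dig k (n - 1) (i + 1) = dig k (n - 1) i := by
        unfold dig
        rw [Nat.succ_div_of_not_dvd fun h => hdvd ((pow_dvd_pow k (by omega)).trans h)]
      have hb := hbound (i + 1) 0 hlast (by omega)
      rw [hW (i + 1) 0 hlast (by omega)]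
      simp only [hb, true_and, Option.some.injEq, Fin.ext_iff, Nat.sub_zero, hlead]

/-- For `n ≥ 3`, the number of blocks of length 1 in `w_n·w̃_n` is exactly
`((k-1)²/k²)·|w_n·w̃_n| = 2·n·(k-1)²·k^(n-2)`. -/
theorem singletonBlocks_wn_rev (k n : ℕ) (hk : 2 ≤ k) (hn : 3 ≤ n) :
    singletonBlocks (wn k (by omega) n ++ (wn k (by omega) n).reverse) =
      2 * n * (k - 1) ^ 2 * k ^ (n - 2) := by
  classical
  have hk0 : 0 < k := by omega
  have hpow : 0 < k ^ n := pow_pos hk0 n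
  have hlen := length_wn k hk0 n
  have h0 := getElem?_wn k hk0 n 0 0 hpow (by omega)
  have h1 := getElem?_wn k hk0 n 0 1 hpow (by omega)
  rw [singletonBlocks_append_reverse (wn k hk0 n) (by rw [hlen]; nlinarith)
    (by simpa [dig] using h0.trans (by simpa [dig] using h1.symm)), hlen]
  have hcols : ((Finset.range (k ^ n * n)).filter (InnerSingleton (wn k hk0 n))).card =
      ∑ j ∈ Finset.range n, ((Finset.range (k ^ n)).filter fun i =>
        InnerSingleton (wn k hk0 n) (i * n + j)).card := by
    rw [Finset.card_eq_sum_card_fiberwise (f := fun p => p % n) (t := Finset.range n)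
      (fun p _ => Finset.mem_coe.2 (Finset.mem_range.2 (Nat.mod_lt _ (by omega))))]
    refine Finset.sum_congr rfl fun j hj => ?_
    rw [Finset.mem_range] at hj
    symm
    refine Finset.card_bij (fun i _ => i * n + j) ?_ ?_ ?_
    · intro i hi
      simp only [Finset.mem_filter, Finset.mem_range] at hi ⊢
      refine ⟨⟨by nlinarith, hi.2⟩, ?_⟩
      rw [Nat.mul_add_mod_self_right, Nat.mod_eq_of_lt hj]
    · intro a _ b _ hab
      exact Nat.eq_of_mul_eq_mul_right (by omega) (Nat.add_right_cancel hab)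
    · intro p hp
      simp only [Finset.mem_filter, Finset.mem_range] at hp
      obtain ⟨⟨hp1, hp2⟩, rfl⟩ := hp
      have e : p / n * n + p % n = p := Nat.div_add_mod' p n
      refine ⟨p / n, ?_, e⟩
      simp only [Finset.mem_filter, Finset.mem_range]
      exact ⟨Nat.div_lt_of_lt_mul (by rwa [mul_comm]), by rwa [e]⟩
  rw [hcols, Finset.sum_congr rfl fun j hj =>
    card_column k n hk hn hk0 j (Finset.mem_range.1 hj)]
  simp
  ring
end

section
/- Let A = {0,…,k−1} with k ≥ 1 and, for each n ≥ 1, let w_n be the concatenation in lexicographic order of all k^n words of length n over A. Then every word of length n over A has exactly n cyclic occurrences in w_n. -/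
/-- The number of cyclic occurrences of `u` in `w` (for `|u| ≤ |w|`). -/
def cyclicOccurrences {A : Type*} [DecidableEq A] (w u : List A) : ℕ :=
  ((Finset.range w.length).filter fun i =>
    ((w ++ w).drop i).take u.length = u).card

theorem flatten_range_length {α : Type*} (f : ℕ → List α) (n : ℕ) (hf : ∀ i, (f i).length = n)
    (m : ℕ) : (((List.range m).map f).flatten).length = m * n := by
  induction m with
  | zero => simp
  | succ m ih =>
    rw [List.range_succ, List.map_append, List.flatten_append, List.length_append, ih]
    simp [hf, Nat.succ_mul]

theorem flatten_range_getElem? {α : Type*} (f : ℕ → List α) (n : ℕ)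
    (hf : ∀ i, (f i).length = n) (m q r : ℕ) (hq : q < m) (hr : r < n) :
    (((List.range m).map f).flatten)[q * n + r]? = (f q)[r]? := by
  induction m with
  | zero => omega
  | succ m ih =>
    have hl := flatten_range_length f n hf m
    rw [List.range_succ, List.map_append, List.flatten_append]
    rcases Nat.lt_succ_iff_lt_or_eq.mp hq with h | rfl
    · have h2 : (q + 1) * n ≤ m * n := Nat.mul_le_mul_right n h
      rw [Nat.succ_mul] at h2
      rw [List.getElem?_append_left (by omega), ih h]
    · rw [List.getElem?_append_right (by omega), hl]
      simp

/-- The letter at position `p` of the infinite concatenation of `lexWord k hk n i` for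
`i = 0, 1, 2, …`; this sequence is periodic and its period word is `wn k hk n`. -/
def letter (k : ℕ) (hk : 0 < k) (n p : ℕ) : Fin k :=
  ⟨p / n / k ^ (n - 1 - p % n) % k, Nat.mod_lt _ hk⟩

theorem digit_mod (k m j a : ℕ) (hj : j < m) : a % k ^ m / k ^ j % k = a / k ^ j % k := by
  obtain ⟨d, rfl⟩ := Nat.exists_eq_add_of_lt hj
  rw [show j + d + 1 = j + (d + 1) by ring, pow_add, Nat.mod_mul_right_div_self, pow_succ,
    Nat.mod_mul_left_mod]

theorem mod_pow_eq_of_digits (k m a b : ℕ) (h : ∀ j < m, a / k ^ j % k = b / k ^ j % k) :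
    a % k ^ m = b % k ^ m := by
  induction m with
  | zero => simp [Nat.mod_one]
  | succ m ih =>
    rw [Nat.mod_pow_succ, Nat.mod_pow_succ, ih fun j hj => h j (by omega), h m (by omega)]

theorem lexWord_add (k : ℕ) (hk : 0 < k) (n i : ℕ) :
    lexWord k hk n (k ^ n + i) = lexWord k hk n i := by
  unfold lexWord
  congr 1
  funext j
  apply Fin.ext
  have hj := j.isLt
  change (k ^ n + i) / k ^ (n - 1 - (j : ℕ)) % k = i / k ^ (n - 1 - (j : ℕ)) % k
  rw [← digit_mod k n _ (k ^ n + i) (by omega), Nat.add_mod_left, digit_mod k n _ i (by omega)]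

theorem wn_append_wn (k : ℕ) (hk : 0 < k) (n : ℕ) :
    wn k hk n ++ wn k hk n
      = ((List.range (k ^ n + k ^ n)).map (lexWord k hk n)).flatten := by
  unfold wn
  rw [List.range_add, List.map_append, List.flatten_append, List.map_map]
  congr 3
  funext i
  exact (lexWord_add k hk n i).symm

theorem wn_append_wn_getElem? (k : ℕ) (hk : 0 < k) (n : ℕ) (hn : 1 ≤ n) (p : ℕ)
    (hp : p < (k ^ n + k ^ n) * n) :
    (wn k hk n ++ wn k hk n)[p]? = some (letter k hk n p) := by
  have hr : p % n < n := Nat.mod_lt _ hn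
  have hq : p / n < k ^ n + k ^ n := Nat.div_lt_of_lt_mul (by rwa [mul_comm])
  have h := flatten_range_getElem? (lexWord k hk n) n (by simp [lexWord]) _ _ _ hq hr
  rw [Nat.div_add_mod'] at h
  rw [wn_append_wn, h]
  simp [lexWord, letter, hr]

theorem letter_mul_add (k : ℕ) (hk : 0 < k) (n q r : ℕ) (hr : r < n) :
    (letter k hk n (q * n + r) : ℕ) = q / k ^ (n - 1 - r) % k := by
  have h1 : (q * n + r) / n = q := by
    rw [mul_comm, Nat.mul_add_div (by omega), Nat.div_eq_of_lt hr, add_zero]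
  have h2 : (q * n + r) % n = r := by
    rw [mul_comm, Nat.mul_add_mod, Nat.mod_eq_of_lt hr]
  simp only [letter, h1, h2]

/-- For a fixed offset `r`, the window starting at `q * n + r` determines `q` modulo `k ^ n`: it shows
the low `n - r` digits of `q` and the high `r` digits of `q + 1`. -/
theorem window_inj (k : ℕ) (hk : 0 < k) (n q q' r : ℕ) (hr : r < n)
    (h : ∀ j < n, letter k hk n (q * n + r + j) = letter k hk n (q' * n + r + j)) :
    q ≡ q' [MOD k ^ n] := by
  -- The first `n - r` letters of the window are the low digits of `q`.
  have hlow : q ≡ q' [MOD k ^ (n - r)] := by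
    apply mod_pow_eq_of_digits
    intro d hd
    have h1 := congrArg Fin.val (h (n - 1 - d - r) (by omega))
    rw [show q * n + r + (n - 1 - d - r) = q * n + (n - 1 - d) by omega,
      show q' * n + r + (n - 1 - d - r) = q' * n + (n - 1 - d) by omega,
      letter_mul_add k hk n _ _ (by omega), letter_mul_add k hk n _ _ (by omega),
      show n - 1 - (n - 1 - d) = d by omega] at h1
    exact h1
  have hlow1 : (q + 1) % k ^ (n - r) = (q' + 1) % k ^ (n - r) := hlow.add_right 1
  have hall : q + 1 ≡ q' + 1 [MOD k ^ n] := by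
    apply mod_pow_eq_of_digits
    intro d hd
    by_cases hdr : d < n - r
    · rw [← digit_mod k (n - r) d (q + 1) hdr, hlow1, digit_mod k (n - r) d (q' + 1) hdr]
    · -- The last `r` letters of the window are the high digits of `q + 1`.
      have h1 := congrArg Fin.val (h (n + (n - 1 - d) - r) (by omega))
      rw [show q * n + r + (n + (n - 1 - d) - r) = (q + 1) * n + (n - 1 - d) by
          rw [Nat.succ_mul]; omega,
        show q' * n + r + (n + (n - 1 - d) - r) = (q' + 1) * n + (n - 1 - d) by
          rw [Nat.succ_mul]; omega,
        letter_mul_add k hk n _ _ (by omega), letter_mul_add k hk n _ _ (by omega),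
        show n - 1 - (n - 1 - d) = d by omega] at h1
      exact h1
  exact Nat.ModEq.add_right_cancel' 1 hall

/-- By counting, the injectivity of `window_inj` makes every word occur at each offset `r`. -/
theorem window_surj (k : ℕ) (hk : 0 < k) (n r : ℕ) (hr : r < n) (v : Fin n → Fin k) :
    ∃ q < k ^ n, ∀ j : Fin n, letter k hk n (q * n + r + j) = v j := by
  let g : Fin (k ^ n) → (Fin n → Fin k) := fun q j => letter k hk n (q * n + r + j)
  have hg : Function.Injective g := by
    intro q q' hqq
    have h := window_inj k hk n q q' r hr fun j hj => congrFun hqq ⟨j, hj⟩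
    exact Fin.ext (h.eq_of_lt_of_lt q.isLt q'.isLt)
  have hb := (Fintype.bijective_iff_injective_and_card g).mpr ⟨hg, by simp⟩
  obtain ⟨q, hq⟩ := hb.2 v
  exact ⟨q, q.isLt, fun j => congrFun hq j⟩

theorem window_eq_iff (k : ℕ) (hk : 0 < k) (n : ℕ) (hn : 1 ≤ n) (u : List (Fin k))
    (hu : u.length = n) (i : ℕ) (hi : i < k ^ n * n) :
    ((wn k hk n ++ wn k hk n).drop i).take u.length = u ↔
      ∀ j : Fin n, letter k hk n (i + j) = u[j] := by
  have hK : 1 * n ≤ k ^ n * n := Nat.mul_le_mul_right n (Nat.pow_pos hk)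
  have hlet : ∀ j < n,
      (wn k hk n ++ wn k hk n)[i + j]? = some (letter k hk n (i + j)) := fun j hj =>
    wn_append_wn_getElem? k hk n hn _ (by rw [add_mul]; omega)
  constructor
  · rintro h ⟨j, hj⟩
    have h1 := congrArg (fun l => l[j]?) h
    simp only [List.getElem?_take, List.getElem?_drop, hu, hj, if_true, hlet j hj] at h1
    rw [List.getElem?_eq_getElem (by omega)] at h1
    exact Option.some.inj h1
  · intro h
    apply List.ext_getElem?
    intro j
    rw [List.getElem?_take, List.getElem?_drop]
    split_ifs with hj
    · rw [hu] at hj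
      rw [hlet j hj, List.getElem?_eq_getElem (by omega)]
      exact congrArg some (h ⟨j, hj⟩)
    · rw [List.getElem?_eq_none (by omega)]

/-- Every word of length `n` has exactly `n` cyclic occurrences in `w_n`. -/
theorem cyclicOccurrences_wn (k n : ℕ) (hk : 0 < k) (hn : 1 ≤ n)
    (u : List (Fin k)) (hu : u.length = n) :
    cyclicOccurrences (wn k hk n) u = n := by
  have hlen : (wn k hk n).length = k ^ n * n :=
    flatten_range_length (lexWord k hk n) n (by simp [lexWord]) _
  unfold cyclicOccurrences
  -- Reduction modulo `n` is a bijection from the set of occurrences to the `n` residues.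
  conv_rhs => rw [← Finset.card_range n]
  apply Finset.card_nbij (fun i => i % n)
  · intro i _
    simpa using Nat.mod_lt i hn
  · intro i hi i' hi' hmod
    simp only [Finset.coe_filter, Finset.mem_range, Set.mem_ofPred_eq, hlen] at hi hi'
    have h := (window_eq_iff k hk n hn u hu i hi.1).mp hi.2
    have h' := (window_eq_iff k hk n hn u hu i' hi'.1).mp hi'.2
    change i % n = i' % n at hmod
    have hq := window_inj k hk n (i / n) (i' / n) (i % n) (Nat.mod_lt _ hn) (by
      intro j hj
      rw [Nat.div_add_mod', hmod, Nat.div_add_mod']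
      exact (h ⟨j, hj⟩).trans (h' ⟨j, hj⟩).symm)
    have hqe := hq.eq_of_lt_of_lt (Nat.div_lt_of_lt_mul (by rw [mul_comm]; exact hi.1))
      (Nat.div_lt_of_lt_mul (by rw [mul_comm]; exact hi'.1))
    rw [← Nat.div_add_mod' i n, ← Nat.div_add_mod' i' n, hqe, hmod]
  · intro r hr
    have hr : r < n := by simpa using hr
    obtain ⟨q, hq, h⟩ := window_surj k hk n r hr fun j => u[j]
    have hi : q * n + r < k ^ n * n := by
      have h2 : (q + 1) * n ≤ k ^ n * n := Nat.mul_le_mul_right n hq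
      rw [Nat.succ_mul] at h2
      omega
    refine ⟨q * n + r, ?_, ?_⟩
    · simp only [Finset.coe_filter, Finset.mem_range, Set.mem_ofPred_eq, hlen]
      exact ⟨hi, (window_eq_iff k hk n hn u hu _ hi).mpr h⟩
    · change (q * n + r) % n = r
      rw [mul_comm, Nat.mul_add_mod, Nat.mod_eq_of_lt hr]
end

section
/- For finite words u and v over the alphabet A = {0,…,k−1}, if the runs of the deterministic pushdown transducer 𝒯_k on u and on v, both starting from the initial configuration (state 0, stack containing only the bottom marker), end in the same state with the same stack content and produce the same output word, then u = v. Here the run of 𝒯_k is modeled by iterating over the input symbols the transition function on triples (state b ∈ {0,1}, stack s over A, output word o over A ⊎ {✦, ✪}), starting from (0, [], ε): from (0, s, o) reading a, go to (1, tail s, o) if the head of s equals a, and to (0, a :: s, o·a) otherwise; from (1, s, o) reading a, go to (0, tail s, o·✪) if the head of s equals a, and to (0, a :: s, o·✦·a) otherwise. -/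
/-!
The output word alone determines the sequence of stack operations: a letter stands for a push of
that letter, `✪` for two pops, and `✦` for a single pop. Since a pop consumes the input symbol
lying on top of the stack, replaying these operations recovers the stack and hence the input. Only
a pending pop (final state 1) leaves no trace in the output; its symbol is the top of the replayed
stack. Thus `decode` followed by `recover` is a left inverse of `run`, by the invariant
`decode_run`.
-/

/-- One step of the transducer `𝒯_k`, keeping track of the state (`false`/`true`
for states 0/1), the stack (top symbol at the head) and the output word written
so far over the alphabet `B = A ⊎ {✦, ✪}` (here `Sum.inr false` codes `✦` and
`Sum.inr true` codes `✪`). -/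
def outStep {k : ℕ} :
    Bool × List (Fin k) × List (Fin k ⊕ Bool) → Fin k →
      Bool × List (Fin k) × List (Fin k ⊕ Bool)
  | (false, s, o), a =>
      if s.head? = some a then (true, s.tail, o)
      else (false, a :: s, o ++ [Sum.inl a])
  | (true, s, o), a =>
      if s.head? = some a then (false, s.tail, o ++ [Sum.inr true])
      else (false, a :: s, o ++ [Sum.inr false, Sum.inl a])

/-- The configuration (state, stack, output word) reached by `𝒯_k` after reading
`w` from the initial configuration. -/
def run {k : ℕ} (w : List (Fin k)) : Bool × List (Fin k) × List (Fin k ⊕ Bool) :=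
  w.foldl outStep (false, [], [])

/-- One step of the decoder: replays on the pair (stack, input read so far) the stack operations
that a single output symbol stands for. -/
def decodeStep {k : ℕ} (p : List (Fin k) × List (Fin k)) :
    Fin k ⊕ Bool → List (Fin k) × List (Fin k)
  | Sum.inl a => (a :: p.1, p.2 ++ [a])
  | Sum.inr true => (p.1.drop 2, p.2 ++ p.1.take 2)
  | Sum.inr false => (p.1.drop 1, p.2 ++ p.1.take 1)

/-- The stack and the input word reconstructed from an output word. -/
def decode {k : ℕ} (o : List (Fin k ⊕ Bool)) : List (Fin k) × List (Fin k) :=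
  o.foldl decodeStep ([], [])

/-- The input word reconstructed from a final configuration: in state 1 the symbol of the pending
pop is appended to the decoded output. -/
def recover {k : ℕ} (c : Bool × List (Fin k) × List (Fin k ⊕ Bool)) : List (Fin k) :=
  if c.1 then (decode c.2.2).2 ++ (decode c.2.2).1.take 1 else (decode c.2.2).2

/-- `Decodes w c` relates the configuration `c` to the input `w` it comes from: in state 0 the
decoder reproduces the stack and `w` exactly, while in state 1 it is behind by one pop. -/
def Decodes {k : ℕ} (w : List (Fin k)) :
    Bool × List (Fin k) × List (Fin k ⊕ Bool) → Prop
  | (false, s, o) => decode o = (s, w)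
  | (true, s, o) => ∃ c w', decode o = (c :: s, w') ∧ w = w' ++ [c]

lemma Decodes.step {k : ℕ} {w : List (Fin k)}
    {c : Bool × List (Fin k) × List (Fin k ⊕ Bool)} (h : Decodes w c) (a : Fin k) :
    Decodes (w ++ [a]) (outStep c a) := by
  obtain ⟨b, s, o⟩ := c
  cases b
  · have h : decode o = (s, w) := h
    by_cases hs : s.head? = some a
    · obtain ⟨t, rfl⟩ := List.head?_eq_some_iff.mp hs
      simpa [outStep, Decodes] using h
    · simp only [decode] at h
      simp [outStep, hs, Decodes, decode, h, decodeStep]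
  · obtain ⟨c, w', h, rfl⟩ := h
    simp only [decode] at h
    by_cases hs : s.head? = some a
    · obtain ⟨t, rfl⟩ := List.head?_eq_some_iff.mp hs
      simp [outStep, Decodes, decode, h, decodeStep]
    · simp [outStep, hs, Decodes, decode, h, decodeStep]

lemma decode_run {k : ℕ} (w : List (Fin k)) : Decodes w (run w) := by
  induction w using List.reverseRecOn with
  | nil => rfl
  | append_singleton w a ih =>
    have h := ih.step a
    simpa [run] using h

lemma Decodes.recover_eq {k : ℕ} {w : List (Fin k)}
    {c : Bool × List (Fin k) × List (Fin k ⊕ Bool)} (h : Decodes w c) : recover c = w := by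
  obtain ⟨b, s, o⟩ := c
  cases b
  · have h : decode o = (s, w) := h
    simp [recover, h]
  · obtain ⟨c, w', h, rfl⟩ := h
    simp [recover, h]

/-- The transducer `𝒯_k` is one-to-one: if the runs on two inputs end in the
same state with the same stack content and the same output word, the inputs are
equal. -/
theorem run_injective (k : ℕ) (hk : 0 < k) (u v : List (Fin k))
    (h : run u = run v) : u = v := by
  rw [← (decode_run u).recover_eq, h, (decode_run v).recover_eq]
end
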